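/- Let F be a field of characteristic zero and P ∈ F[x_1,…,x_n] with the hypersurface P = 0 smooth, i.e., (P, ∂_1P, …, ∂_nP) is the unit ideal of F[x_1,…,x_n]. Let Ω be the complex of polynomial differential forms on F^n with the de Rham differential d, let Ω[P^{-1}] be the complex of forms with coefficients in the localization F[x_1,…,x_n][P^{-1}], with d extended by the quotient rule, and let Ω[P^{-1}]/Ω be the quotient complex. Then the degree-raising map Ω/(P,dP) → Ω[P^{-1}]/Ω given by ω ↦ ω̃∧dP/P (ω̃ a lift of ω) is a well-defined chain map and induces an isomorphism H^k(Ω/(P,dP)) ≅ H^{k+1}(Ω[P^{-1}]/Ω) for every k. -/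

import Mathlib

open MvPolynomial

noncomputable section

/-- Polynomial differential forms on `K^n`: a form assigns to each subset
`s ⊆ {1,…,n}` (the indices of `dx_{i_1} ∧ ⋯ ∧ dx_{i_k}` with `i_1 < ⋯ < i_k`)
a polynomial coefficient. -/
abbrev Form (n : ℕ) (K : Type*) [CommRing K] :=
  Finset (Fin n) → MvPolynomial (Fin n) K

/-- The sign `(-1)^{#{j ∈ s | j < i}}`. -/
def sgn {n : ℕ} (K : Type*) [CommRing K] (s : Finset (Fin n)) (i : Fin n) :
    MvPolynomial (Fin n) K :=
  (-1) ^ (s.filter (fun j => j < i)).card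

/-- The twisted de Rham differential `d_α ω = dω + α ∧ ω` associated to a
(closed) polynomial 1-form `α = Σ_i α_i dx_i`. -/
def dTwist {n : ℕ} {K : Type*} [CommRing K]
    (α : Fin n → MvPolynomial (Fin n) K) :
    Form n K →ₗ[K] Form n K where
  toFun ω := fun s => ∑ i ∈ s,
    sgn K s i * (pderiv i (ω (s.erase i)) + α i * ω (s.erase i))
  map_add' ω₁ ω₂ := by
    funext s
    simp only [Pi.add_apply]
    rw [← Finset.sum_add_distrib]
    refine Finset.sum_congr rfl fun i _ => ?_
    simp only [map_add]
    ring
  map_smul' c ω := by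
    funext s
    simp only [Pi.smul_apply, map_smul, RingHom.id_apply, Finset.smul_sum]
    refine Finset.sum_congr rfl fun i _ => ?_
    simp [mul_add, mul_smul_comm, smul_add, mul_assoc]

/-- The (untwisted) polynomial de Rham differential. -/
abbrev dRham (n : ℕ) (K : Type*) [CommRing K] : Form n K →ₗ[K] Form n K :=
  dTwist (fun _ => 0)

/-- Multiplication of a form by a 1-form `α`, `ω ↦ α ∧ ω`. -/
def wedge1 {n : ℕ} {K : Type*} [CommRing K]
    (α : Fin n → MvPolynomial (Fin n) K) :
    Form n K →ₗ[K] Form n K where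
  toFun ω := fun s => ∑ i ∈ s, sgn K s i * (α i * ω (s.erase i))
  map_add' ω₁ ω₂ := by
    funext s
    simp only [Pi.add_apply]
    rw [← Finset.sum_add_distrib]
    refine Finset.sum_congr rfl fun i _ => ?_
    ring
  map_smul' c ω := by
    funext s
    simp only [Pi.smul_apply, RingHom.id_apply, Finset.smul_sum]
    refine Finset.sum_congr rfl fun i _ => ?_
    simp [mul_smul_comm]

/-- Forms of pure degree `k`: those supported on index sets of cardinality `k`. -/
def formDeg (n : ℕ) (K : Type*) [CommRing K] (k : ℕ) : Submodule K (Form n K) where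
  carrier := {ω | ∀ s : Finset (Fin n), s.card ≠ k → ω s = 0}
  add_mem' := by
    intro a b ha hb s hs
    simp [Pi.add_apply, ha s hs, hb s hs]
  zero_mem' := fun s _ => rfl
  smul_mem' := by
    intro c a ha s hs
    simp [Pi.smul_apply, ha s hs]

/-- Degree-`k` cocycles of the twisted de Rham complex. -/
def cocycles {n : ℕ} {K : Type*} [CommRing K]
    (α : Fin n → MvPolynomial (Fin n) K) (k : ℕ) : Submodule K (Form n K) :=
  formDeg n K k ⊓ LinearMap.ker (dTwist α)

/-- Degree-`k` coboundaries of the twisted de Rham complex. -/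
def cobounds {n : ℕ} {K : Type*} [CommRing K]
    (α : Fin n → MvPolynomial (Fin n) K) (k : ℕ) : Submodule K (Form n K) :=
  Submodule.map (dTwist α) (formDeg n K (k - 1))

/-- The degree-`k` twisted de Rham cohomology of the 1-form `α`. -/
abbrev Htwist {n : ℕ} {K : Type*} [CommRing K]
    (α : Fin n → MvPolynomial (Fin n) K) (k : ℕ) :=
  (cocycles α k) ⧸ (Submodule.comap (cocycles α k).subtype (cobounds α k))

/-- The differential `df` of a polynomial, as the family of coefficients of the
1-form `Σ_i (∂f/∂x_i) dx_i`. -/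
def grad {n : ℕ} {K : Type*} [CommRing K] (f : MvPolynomial (Fin n) K) :
    Fin n → MvPolynomial (Fin n) K :=
  fun i => pderiv i f

/-- The twisted de Rham cohomology `H^k_f(K)` of a polynomial `f`. -/
abbrev Hf {n : ℕ} {K : Type*} [CommRing K] (f : MvPolynomial (Fin n) K) (k : ℕ) :=
  Htwist (grad f) k

/-- The top form `dx_1 ∧ ⋯ ∧ dx_n`. -/
def topForm (n : ℕ) (K : Type*) [CommRing K] : Form n K :=
  fun s => if s = Finset.univ then 1 else 0


/-- Multiplication of forms by the polynomial `P`, as a linear map. -/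
def mulForm {n : ℕ} {K : Type*} [CommRing K] (P : MvPolynomial (Fin n) K) :
    Form n K →ₗ[K] Form n K where
  toFun ω := fun s => P * ω s
  map_add' ω₁ ω₂ := by funext s; simp [Pi.add_apply, mul_add]
  map_smul' c ω := by funext s; simp [Pi.smul_apply, mul_smul_comm]

/-- The subcomplex `P·Ω + dP∧Ω` of the polynomial de Rham complex. -/
def relSub {n : ℕ} {K : Type*} [CommRing K] (P : MvPolynomial (Fin n) K) :
    Submodule K (Form n K) :=
  LinearMap.range (mulForm P) ⊔ LinearMap.range (wedge1 (grad P))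

/-- Degree-`k` cocycles of the quotient complex `Ω/(P,dP)`: degree-`k` forms
whose de Rham differential lies in `P·Ω + dP∧Ω`. -/
def relZ {n : ℕ} {K : Type*} [CommRing K] (P : MvPolynomial (Fin n) K)
    (k : ℕ) : Submodule K (Form n K) :=
  formDeg n K k ⊓ Submodule.comap (dRham n K) (relSub P)

/-- Degree-`k` coboundaries of the quotient complex `Ω/(P,dP)`. -/
def relB {n : ℕ} {K : Type*} [CommRing K] (P : MvPolynomial (Fin n) K)
    (k : ℕ) : Submodule K (Form n K) :=
  Submodule.map (dRham n K) (formDeg n K (k - 1)) ⊔ relSub P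

/-- The degree-`k` cohomology of the quotient complex `Ω/(P,dP)`, i.e. the
algebraic de Rham cohomology of the affine hypersurface `P = 0`. -/
abbrev relH {n : ℕ} {K : Type*} [CommRing K] (P : MvPolynomial (Fin n) K)
    (k : ℕ) :=
  (relZ P k) ⧸ (Submodule.comap (relZ P k).subtype (relB P k))

/-- The extension `ω̃` of a polynomial form on `K^n` to `K^{n+1}` (the lift
along the projection forgetting the last coordinate `t`). -/
def extForm {n : ℕ} {K : Type*} [CommRing K] (ω : Form n K) : Form (n + 1) K :=
  fun s' => ∑ s : Finset (Fin n),
    if s' = Finset.image Fin.castSucc s then rename Fin.castSucc (ω s) else 0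

/-- The coefficients of the 1-form `dt` on `K^{n+1}` (where `t` is the last
coordinate). -/
def dtForm (n : ℕ) (K : Type*) [CommRing K] :
    Fin (n + 1) → MvPolynomial (Fin (n + 1)) K :=
  fun i => if i = Fin.last n then 1 else 0

/-- The coefficients of the 1-form `dP` lifted to `K^{n+1}`. -/
def liftDP {n : ℕ} {K : Type*} [CommRing K] (P : MvPolynomial (Fin n) K) :
    Fin (n + 1) → MvPolynomial (Fin (n + 1)) K :=
  fun i => Fin.lastCases 0 (fun j => rename Fin.castSucc (pderiv j P)) i

/-- The map `ω ↦ ω̃ ∧ dP ∧ dt` from forms on `K^n` to forms on `K^{n+1}`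
(using `ω ∧ dP ∧ dt = −dt ∧ dP ∧ ω̃`). -/
def thetaMap {n : ℕ} {K : Type*} [CommRing K] (P : MvPolynomial (Fin n) K)
    (ω : Form n K) : Form (n + 1) K :=
  fun s' => -(wedge1 (dtForm n K) (wedge1 (liftDP P) (extForm ω)) s')

/-- The function `f(t,x) = t·P(x)` on `K^{n+1}`. -/
def tP {n : ℕ} {K : Type*} [CommRing K] (P : MvPolynomial (Fin n) K) :
    MvPolynomial (Fin (n + 1)) K :=
  X (Fin.last n) * rename Fin.castSucc P

section Localized

variable {F : Type*} [Field F] {n : ℕ}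
variable (Loc : Type*) [CommRing Loc] [Algebra (MvPolynomial (Fin n) F) Loc]
variable [Algebra F Loc] [IsScalarTower F (MvPolynomial (Fin n) F) Loc]

/-- Differential forms on `F^n` with coefficients in the localization
`F[x_1,…,x_n][P⁻¹]`. -/
abbrev FormLoc := Finset (Fin n) → Loc

/-- The de Rham differential on localized forms, extended from the polynomial
de Rham differential by the quotient rule, i.e. built from derivations `D_i`
on the localization extending the partial derivatives `∂_i`. -/
def dLoc (D : Fin n → Derivation F Loc Loc) :
    FormLoc (n := n) Loc →ₗ[F] FormLoc (n := n) Loc where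
  toFun ω := fun s => ∑ i ∈ s,
    ((-1 : Loc) ^ (s.filter (fun j => j < i)).card) * D i (ω (s.erase i))
  map_add' ω₁ ω₂ := by
    funext s
    simp only [Pi.add_apply, map_add, mul_add]
    rw [← Finset.sum_add_distrib]
  map_smul' c ω := by
    funext s
    simp only [Pi.smul_apply, RingHom.id_apply, Finset.smul_sum]
    refine Finset.sum_congr rfl fun i _ => ?_
    rw [Derivation.map_smul, mul_smul_comm]

/-- Localized forms of pure degree `k`. -/
def formDegLoc (k : ℕ) : Submodule F (FormLoc (n := n) Loc) where
  carrier := {ω | ∀ s : Finset (Fin n), s.card ≠ k → ω s = 0}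
  add_mem' := by
    intro a b ha hb s hs
    simp [Pi.add_apply, ha s hs, hb s hs]
  zero_mem' := fun s _ => rfl
  smul_mem' := by
    intro c a ha s hs
    simp [Pi.smul_apply, ha s hs]

/-- The inclusion of polynomial forms into localized forms. -/
def polyInc : Form n F →ₗ[F] FormLoc (n := n) Loc :=
  LinearMap.compLeft
    (IsScalarTower.toAlgHom F (MvPolynomial (Fin n) F) Loc).toLinearMap
    (Finset (Fin n))

/-- The submodule `Ω ⊆ Ω[P⁻¹]` of forms with polynomial coefficients. -/
def polySub : Submodule F (FormLoc (n := n) Loc) :=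
  LinearMap.range (polyInc Loc)

/-- Degree-`k` cocycles of the quotient complex `Ω[P⁻¹]/Ω`. -/
def locZ (D : Fin n → Derivation F Loc Loc) (k : ℕ) :
    Submodule F (FormLoc (n := n) Loc) :=
  formDegLoc Loc k ⊓ Submodule.comap (dLoc Loc D) (polySub Loc)

/-- Degree-`k` coboundaries of the quotient complex `Ω[P⁻¹]/Ω`. -/
def locB (D : Fin n → Derivation F Loc Loc) (k : ℕ) :
    Submodule F (FormLoc (n := n) Loc) :=
  Submodule.map (dLoc Loc D) (formDegLoc Loc (k - 1)) ⊔ polySub Loc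

/-- The degree-`k` cohomology of the quotient complex `Ω[P⁻¹]/Ω`. -/
abbrev locH (D : Fin n → Derivation F Loc Loc) (k : ℕ) :=
  (locZ Loc D k) ⧸ (Submodule.comap (locZ Loc D k).subtype (locB Loc D k))

/-- The element `1/P` of the localization. -/
def invP (P : MvPolynomial (Fin n) F) [IsLocalization.Away P Loc] : Loc :=
  IsLocalization.mk' Loc (1 : MvPolynomial (Fin n) F)
    (⟨P, ⟨1, pow_one P⟩⟩ : Submonoid.powers P)

/-- The map `ω ↦ ω̃ ∧ dP / P` on degree-`k` forms (with
`ω ∧ dP = (−1)^k dP ∧ ω`). -/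
def phiDeg (P : MvPolynomial (Fin n) F) [IsLocalization.Away P Loc] (k : ℕ)
    (ω : Form n F) : FormLoc (n := n) Loc :=
  fun s => ((-1 : F) ^ k) •
    (invP Loc P *
      algebraMap (MvPolynomial (Fin n) F) Loc (wedge1 (grad P) ω s))

end Localized

/-!
Let `a P + ∑ i, b_i ∂_i P = 1`. By Cartan's formula, contraction with the vector field
`∑ i, b_i ∂/∂x_i` is a null-homotopy modulo `P` of multiplication by `dP`; so a form `η` such that
`P` divides `dP ∧ η` can be written as `η = dP ∧ ξ + P ζ`. In particular `dP ∧ η / P` is polynomial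
exactly if `η ∈ P Ω + dP ∧ Ω`.

Let `θ = η / P ^ (m + 1)` be a localized form such that `dθ` has at most a simple pole. Then the
leading coefficient `dP ∧ η` of `dθ` is divisible by `P`, so `η = dP ∧ ξ + P ζ`. If `m ≠ 0`,
subtracting the exact form `-d (ξ / (m P ^ m))` leaves `(ζ + dξ / m) / P ^ m`, so by induction `θ`
may be assumed to have a simple pole; then `θ = dP ∧ ξ / P + ζ`. Applied to cocycles this proves
surjectivity on cohomology, and applied to primitives of `dP ∧ ω / P` it proves injectivity.
-/

open scoped Finset

section ExteriorOperators

variable {ι : Type*} [LinearOrder ι]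

/-- The sign `±1` with `dx_i ∧ dx_s = ± dx_{insert i s}` for `i ∉ s`; it does not change when `i` is
inserted into `s`. -/
def wedgeSign (s : Finset ι) (i : ι) : ℤˣ :=
  (-1) ^ #{j ∈ s | j < i}

lemma wedgeSign_smul {A : Type*} [Ring A] (s : Finset ι) (i : ι) (x : A) :
    wedgeSign s i • x = (-1) ^ #{j ∈ s | j < i} * x := by
  simp [wedgeSign, Units.smul_def, zsmul_eq_mul]

lemma wedgeSign_insert {s : Finset ι} {j : ι} (hj : j ∉ s) (i : ι) :
    wedgeSign (insert j s) i = (if j < i then -1 else 1) * wedgeSign s i := by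
  unfold wedgeSign
  split_ifs with h
  · rw [Finset.filter_insert, if_pos h, Finset.card_insert_of_notMem (by simp [hj]), pow_succ']
  · rw [Finset.filter_insert, if_neg h, one_mul]

lemma wedgeSign_insert_self {s : Finset ι} {i : ι} (hi : i ∉ s) :
    wedgeSign (insert i s) i = wedgeSign s i := by
  simp [wedgeSign_insert hi]

lemma wedgeSign_insert_mul_wedgeSign {s : Finset ι} {i j : ι} (hi : i ∉ s) (hj : j ∉ s)
    (hij : i ≠ j) :
    wedgeSign (insert j s) i * wedgeSign s j = -(wedgeSign (insert i s) j * wedgeSign s i) := by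
  rw [wedgeSign_insert hi, wedgeSign_insert hj]
  rcases hij.lt_or_gt with h | h <;> simp [h, h.not_gt, mul_comm]

lemma wedgeSign_insert_mul_wedgeSign_insert {s : Finset ι} {i j : ι} (hi : i ∉ s) (hj : j ∉ s)
    (hij : i ≠ j) :
    wedgeSign (insert j s) i * wedgeSign (insert i s) j = -(wedgeSign s j * wedgeSign s i) := by
  rw [wedgeSign_insert hi, wedgeSign_insert hj]
  rcases hij.lt_or_gt with h | h <;> simp [h, h.not_gt, mul_comm]

variable (K M : Type*) [CommRing K] [AddCommGroup M] [Module K M]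

/-- The operator `dx_i ∧ ·` on forms `Σ_s ω_s dx_s` with coefficients `ω_s` in a module `M`. -/
def dxWedge (i : ι) : Module.End K (Finset ι → M) where
  toFun ω s := if i ∈ s then wedgeSign s i • ω (s.erase i) else 0
  map_add' ω₁ ω₂ := by
    funext s
    by_cases hi : i ∈ s <;> simp [hi]
  map_smul' c ω := by
    funext s
    by_cases hi : i ∈ s <;> simp [hi, smul_comm _ c]

/-- The contraction of forms with coefficients in `M` with the coordinate vector field `∂/∂x_i`. -/
def dxContract (i : ι) : Module.End K (Finset ι → M) where
  toFun ω s := if i ∈ s then 0 else wedgeSign s i • ω (insert i s)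
  map_add' ω₁ ω₂ := by
    funext s
    by_cases hi : i ∈ s <;> simp [hi]
  map_smul' c ω := by
    funext s
    by_cases hi : i ∈ s <;> simp [hi, smul_comm _ c]

variable {K M}

lemma dxWedge_apply (i : ι) (ω : Finset ι → M) (s : Finset ι) :
    dxWedge K M i ω s = if i ∈ s then wedgeSign s i • ω (s.erase i) else 0 := rfl

lemma dxContract_apply (i : ι) (ω : Finset ι → M) (s : Finset ι) :
    dxContract K M i ω s = if i ∈ s then 0 else wedgeSign s i • ω (insert i s) := rfl

lemma dxWedge_mul_self (i : ι) : dxWedge K M i * dxWedge K M i = 0 := by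
  ext1 ω
  funext s
  simp [dxWedge_apply]

lemma dxWedge_mul_dxWedge_of_ne {i j : ι} (hij : i ≠ j) :
    dxWedge K M i * dxWedge K M j = -(dxWedge K M j * dxWedge K M i) := by
  ext1 ω
  funext s
  simp only [Module.End.mul_apply, LinearMap.neg_apply, Pi.neg_apply, dxWedge_apply]
  by_cases hs : i ∈ s ∧ j ∈ s
  · obtain ⟨hi, hj⟩ := hs
    obtain ⟨t, hit, hjt, rfl⟩ : ∃ t, i ∉ t ∧ j ∉ t ∧ insert i (insert j t) = s :=
      ⟨(s.erase i).erase j, by simp, by simp, by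
        rw [Finset.insert_erase (by simp [hij.symm, hj]), Finset.insert_erase hi]⟩
    have hi' : i ∉ insert j t := by simp [hij, hit]
    have hj' : j ∉ insert i t := by simp [hij.symm, hjt]
    have hsign := wedgeSign_insert_mul_wedgeSign hit hjt hij
    rw [wedgeSign_insert_self hi', Finset.erase_insert hi', Finset.insert_comm,
      wedgeSign_insert_self hj', Finset.erase_insert hj']
    simp [hit, hjt, smul_smul, wedgeSign_insert_self, hsign]
  · by_cases hi : i ∈ s <;> by_cases hj : j ∈ s <;> simp_all

lemma dxContract_mul_dxWedge_of_ne {i j : ι} (hij : i ≠ j) :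
    dxContract K M i * dxWedge K M j = -(dxWedge K M j * dxContract K M i) := by
  ext1 ω
  funext s
  simp only [Module.End.mul_apply, LinearMap.neg_apply, Pi.neg_apply, dxWedge_apply,
    dxContract_apply]
  by_cases hs : i ∉ s ∧ j ∈ s
  · obtain ⟨hi, hj⟩ := hs
    obtain ⟨t, hjt, rfl⟩ : ∃ t, j ∉ t ∧ insert j t = s :=
      ⟨s.erase j, Finset.notMem_erase j s, Finset.insert_erase hj⟩
    have hit : i ∉ t := fun h => hi (Finset.mem_insert_of_mem h)
    have hsign := wedgeSign_insert_mul_wedgeSign_insert hit hjt hij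
    have hj' : j ∉ insert i t := by simp [hij.symm, hjt]
    rw [Finset.insert_comm i j t, Finset.erase_insert hj', Finset.erase_insert hjt,
      wedgeSign_insert_self hj', wedgeSign_insert_self hjt]
    simp [hi, hit, smul_smul, hsign]
  · by_cases hi : i ∈ s <;> by_cases hj : j ∈ s <;> simp_all [hij.symm]

lemma dxContract_mul_dxWedge_self (i : ι) :
    dxContract K M i * dxWedge K M i = 1 - dxWedge K M i * dxContract K M i := by
  ext1 ω
  funext s
  by_cases hi : i ∈ s
  · obtain ⟨t, hit, rfl⟩ : ∃ t, i ∉ t ∧ insert i t = s :=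
      ⟨s.erase i, Finset.notMem_erase i s, Finset.insert_erase hi⟩
    simp [dxWedge_apply, dxContract_apply, hit, wedgeSign_insert_self, smul_smul]
  · simp [dxWedge_apply, dxContract_apply, hi, wedgeSign_insert_self, smul_smul]

end ExteriorOperators

section Koszul

variable {ι : Type*} [LinearOrder ι] [Fintype ι]

/-- The operator `ω ↦ Σ_i dx_i ∧ X_i ω` on forms with coefficients in `M`, where the `X_i` act on
`M`. It is the de Rham differential if `X_i` is the `i`-th partial derivative. -/
def exteriorDeriv {K M : Type*} [CommRing K] [AddCommGroup M] [Module K M]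
    (X : ι → Module.End K M) : Module.End K (Finset ι → M) :=
  ∑ i, dxWedge K M i * (X i).compLeft (Finset ι)

variable {R M : Type*} [CommRing R] [AddCommGroup M] [Module R M]

/-- The operator `α ∧ ·` on forms with coefficients in `M`, for the 1-form `α = Σ_i α_i dx_i`. -/
def wedge (α : ι → R) : Module.End R (Finset ι → M) :=
  ∑ i, α i • dxWedge R M i

/-- The contraction of forms with coefficients in `M` with the vector field `Σ_i b_i ∂/∂x_i`. -/
def interiorProd (b : ι → R) : Module.End R (Finset ι → M) :=
  ∑ i, b i • dxContract R M i

lemma exteriorDeriv_apply {K M : Type*} [CommRing K] [AddCommGroup M] [Module K M]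
    (X : ι → Module.End K M) (ω : Finset ι → M) (s : Finset ι) :
    exteriorDeriv X ω s = ∑ i ∈ s, wedgeSign s i • X i (ω (s.erase i)) := by
  simp [exteriorDeriv, dxWedge_apply]

lemma wedge_apply (α : ι → R) (ω : Finset ι → M) (s : Finset ι) :
    wedge α ω s = ∑ i ∈ s, wedgeSign s i • α i • ω (s.erase i) := by
  simp [wedge, dxWedge_apply, smul_comm (α _)]

lemma sum_sum_eq_zero_of_antisymm {κ N : Type*} [Fintype κ] [AddCommGroup N] (f : κ → κ → N)
    (hself : ∀ i, f i i = 0) (hne : ∀ i j, i ≠ j → f i j = -f j i) : ∑ i, ∑ j, f i j = 0 := by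
  rw [← Fintype.sum_prod_type']
  refine Finset.sum_involution (fun p _ => p.swap) ?_ ?_ (by simp) (by simp)
  · rintro ⟨i, j⟩ -
    rcases eq_or_ne i j with rfl | hij
    · simp [hself]
    · simp [hne i j hij]
  · rintro ⟨i, j⟩ - hf hswap
    obtain rfl : j = i := congrArg Prod.fst hswap
    exact hf (hself j)

lemma exteriorDeriv_mul_self {K M : Type*} [CommRing K] [AddCommGroup M] [Module K M]
    {X : ι → Module.End K M} (hX : ∀ i j, Commute (X i) (X j)) :
    exteriorDeriv X * exteriorDeriv X = 0 := by
  have hcomm (i j : ι) : (X i).compLeft (Finset ι) * dxWedge K M j =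
      dxWedge K M j * (X i).compLeft (Finset ι) := by
    refine LinearMap.ext fun ω => funext fun s => ?_
    by_cases hj : j ∈ s <;> simp [dxWedge_apply, hj]
  have hX' (i j : ι) : (X i).compLeft (Finset ι) * (X j).compLeft (Finset ι) =
      (X j).compLeft (Finset ι) * (X i).compLeft (Finset ι) := by
    exact LinearMap.ext fun ω => funext fun s => LinearMap.congr_fun (hX i j) (ω s)
  rw [exteriorDeriv, Finset.sum_mul_sum]
  have hterm (i j : ι) : dxWedge K M i * (X i).compLeft (Finset ι) *
      (dxWedge K M j * (X j).compLeft (Finset ι)) = dxWedge K M i * dxWedge K M j *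
        ((X i).compLeft (Finset ι) * (X j).compLeft (Finset ι)) := by
    rw [mul_assoc, ← mul_assoc _ (dxWedge K M j), hcomm, mul_assoc, mul_assoc]
  simp only [hterm]
  refine sum_sum_eq_zero_of_antisymm _ (fun i => ?_) (fun i j hij => ?_)
  · rw [dxWedge_mul_self, zero_mul]
  · rw [dxWedge_mul_dxWedge_of_ne hij, hX' i j]
    exact LinearMap.neg_comp _ _

lemma exteriorDeriv_smul {K : Type*} [CommRing K] [Algebra K R] (X : ι → Derivation K R R) (f : R)
    (ω : Finset ι → R) :
    exteriorDeriv (fun i => (X i).toLinearMap) (f • ω) =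
      wedge (fun i => X i f) ω + f • exteriorDeriv (fun i => (X i).toLinearMap) ω := by
  funext s
  simp only [exteriorDeriv_apply, wedge_apply, Pi.add_apply, Pi.smul_apply, Finset.smul_sum,
    ← Finset.sum_add_distrib]
  refine Finset.sum_congr rfl fun i _ => ?_
  rw [smul_comm f, ← smul_add, Derivation.coeFn_coe, smul_eq_mul, Derivation.leibniz, add_comm,
    smul_eq_mul, smul_eq_mul, smul_eq_mul, mul_comm (ω _)]

lemma wedge_mul_self (α : ι → R) : (wedge α * wedge α : Module.End R (Finset ι → M)) = 0 := by
  rw [wedge, Finset.sum_mul_sum]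
  refine sum_sum_eq_zero_of_antisymm _ (fun i => ?_) (fun i j hij => ?_)
  · rw [smul_mul_smul_comm, dxWedge_mul_self, smul_zero]
  · rw [smul_mul_smul_comm, smul_mul_smul_comm, dxWedge_mul_dxWedge_of_ne hij, mul_comm, smul_neg]

lemma interiorProd_mul_wedge_add_wedge_mul_interiorProd (α b : ι → R) :
    (interiorProd b * wedge α + wedge α * interiorProd b : Module.End R (Finset ι → M)) =
      (∑ i, b i * α i) • 1 := by
  have hCAR (i j : ι) : (b i * α j) • (dxContract R M i * dxWedge R M j) =
      -((b i * α j) • (dxWedge R M j * dxContract R M i)) +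
        if i = j then (b i * α i) • 1 else 0 := by
    rcases eq_or_ne i j with rfl | hij
    · rw [dxContract_mul_dxWedge_self, if_pos rfl, smul_sub, neg_add_eq_sub]
    · rw [dxContract_mul_dxWedge_of_ne hij, if_neg hij, smul_neg, add_zero]
  rw [wedge, interiorProd, Finset.sum_mul_sum, Finset.sum_mul_sum,
    Finset.sum_comm (f := fun i j => α i • dxWedge R M i * b j • dxContract R M j),
    ← Finset.sum_add_distrib, Finset.sum_smul]
  refine Finset.sum_congr rfl fun i _ => ?_
  simp only [← Finset.sum_add_distrib, smul_mul_smul_comm, hCAR, mul_comm (α _)]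
  simp

/-- The contraction with `b` is a null-homotopy, modulo `p`, of the Koszul complex of `α`. -/
lemma eq_wedge_add_smul_of_wedge_eq_smul {α b : ι → R} {a p : R}
    (hab : a * p + ∑ i, b i * α i = 1) {η μ : Finset ι → M} (h : wedge α η = p • μ) :
    η = wedge α (interiorProd b η) + p • (interiorProd b μ + a • η) := by
  have hCartan := LinearMap.congr_fun (interiorProd_mul_wedge_add_wedge_mul_interiorProd α b) η
  simp only [LinearMap.add_apply, Module.End.mul_apply, LinearMap.smul_apply, Module.End.one_apply,
    h, map_smul] at hCartan
  calc η = (∑ i, b i * α i) • η + (p * a) • η := by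
        rw [← add_smul, add_comm, mul_comm p, hab, one_smul]
    _ = wedge α (interiorProd b η) + p • (interiorProd b μ + a • η) := by
        rw [← hCartan, smul_add, smul_smul]
        abel

end Koszul

section Degree

variable {ι : Type*} (M : Type*) [AddCommGroup M]

/-- The forms of degree `j`, with coefficients in `M`. The degree is an integer, so that the forms
of degree `j - 1` vanish for `j = 0`. -/
def formsOfDegree (j : ℤ) : AddSubgroup (Finset ι → M) where
  carrier := {ω | ∀ s : Finset ι, (#s : ℤ) ≠ j → ω s = 0}
  add_mem' hω₁ hω₂ s hs := by simp [hω₁ s hs, hω₂ s hs]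
  zero_mem' _ _ := rfl
  neg_mem' hω s hs := by simp [hω s hs]

variable {M} {j : ℤ} {ω : Finset ι → M}

lemma smul_mem_formsOfDegree {R : Type*} [SMulZeroClass R M] (c : R)
    (hω : ω ∈ formsOfDegree M j) : c • ω ∈ formsOfDegree M j :=
  fun s hs => by rw [Pi.smul_apply, hω s hs, smul_zero]

variable [LinearOrder ι] {K : Type*} [CommRing K] [Module K M]

lemma dxWedge_mem_formsOfDegree (i : ι) (hω : ω ∈ formsOfDegree M j) :
    dxWedge K M i ω ∈ formsOfDegree M (j + 1) := by
  intro s hs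
  rw [dxWedge_apply, ite_eq_right_iff]
  intro hi
  rw [hω, smul_zero]
  have := Finset.card_erase_add_one hi
  omega

lemma dxContract_mem_formsOfDegree (i : ι) (hω : ω ∈ formsOfDegree M j) :
    dxContract K M i ω ∈ formsOfDegree M (j - 1) := by
  intro s hs
  rw [dxContract_apply, ite_eq_left_iff]
  intro hi
  rw [hω, smul_zero]
  rw [Finset.card_insert_of_notMem hi]
  omega

variable [Fintype ι]

lemma exteriorDeriv_mem_formsOfDegree (X : ι → Module.End K M) (hω : ω ∈ formsOfDegree M j) :
    exteriorDeriv X ω ∈ formsOfDegree M (j + 1) := by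
  rw [exteriorDeriv, LinearMap.sum_apply]
  refine sum_mem fun i _ => dxWedge_mem_formsOfDegree (K := K) i fun s hs => ?_
  simp [hω s hs]

lemma wedge_mem_formsOfDegree (α : ι → K) (hω : ω ∈ formsOfDegree M j) :
    wedge α ω ∈ formsOfDegree M (j + 1) := by
  rw [wedge, LinearMap.sum_apply]
  exact sum_mem fun i _ => smul_mem_formsOfDegree (α i) (dxWedge_mem_formsOfDegree (K := K) i hω)

lemma interiorProd_mem_formsOfDegree (b : ι → K) (hω : ω ∈ formsOfDegree M j) :
    interiorProd b ω ∈ formsOfDegree M (j - 1) := by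
  rw [interiorProd, LinearMap.sum_apply]
  exact sum_mem fun i _ => smul_mem_formsOfDegree (b i) (dxContract_mem_formsOfDegree (K := K) i hω)

end Degree

section PolynomialForms

variable {n : ℕ} {K : Type*} [CommRing K]

lemma dRham_eq_exteriorDeriv :
    dRham n K = exteriorDeriv fun i => (pderiv (R := K) i).toLinearMap := by
  refine LinearMap.ext fun ω => funext fun s => ?_
  simp [dTwist, sgn, exteriorDeriv_apply, wedgeSign_smul]

lemma wedge1_eq_wedge (α : Fin n → MvPolynomial (Fin n) K) (ω : Form n K) :
    wedge1 α ω = wedge α ω := by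
  funext s
  simp [wedge1, sgn, wedge_apply, wedgeSign_smul]

lemma wedge1_smul (α : Fin n → MvPolynomial (Fin n) K) (p : MvPolynomial (Fin n) K)
    (ω : Form n K) : wedge1 α (p • ω) = p • wedge1 α ω := by
  simp only [wedge1_eq_wedge, map_smul]

lemma wedge1_wedge1 (α : Fin n → MvPolynomial (Fin n) K) (ω : Form n K) :
    wedge1 α (wedge1 α ω) = 0 := by
  simp only [wedge1_eq_wedge]
  exact LinearMap.congr_fun (wedge_mul_self α) ω

lemma commute_pderiv {σ : Type*} (i j : σ) :
    Commute (pderiv (R := K) i).toLinearMap (pderiv (R := K) j).toLinearMap := by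
  classical
  have hbracket : ⁅pderiv (R := K) i, pderiv (R := K) j⁆ = 0 :=
    MvPolynomial.derivation_ext fun l => by
      rw [Derivation.commutator_apply, pderiv_X, pderiv_X]
      simp [Pi.single_apply, apply_ite]
  exact LinearMap.ext fun p => sub_eq_zero.mp (DFunLike.congr_fun hbracket p)

lemma dRham_dRham (ω : Form n K) : dRham n K (dRham n K ω) = 0 := by
  rw [dRham_eq_exteriorDeriv]
  exact LinearMap.congr_fun (exteriorDeriv_mul_self commute_pderiv) ω

lemma dRham_smul (p : MvPolynomial (Fin n) K) (ω : Form n K) :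
    dRham n K (p • ω) = wedge1 (grad p) ω + p • dRham n K ω := by
  rw [wedge1_eq_wedge, dRham_eq_exteriorDeriv]
  exact exteriorDeriv_smul (fun i => pderiv i) p ω

lemma dRham_wedge1_grad (p : MvPolynomial (Fin n) K) (ω : Form n K) :
    dRham n K (wedge1 (grad p) ω) = -wedge1 (grad p) (dRham n K ω) := by
  have h := dRham_dRham (p • ω)
  rwa [dRham_smul, map_add, dRham_smul, dRham_dRham, smul_zero, add_zero,
    add_eq_zero_iff_eq_neg] at h

lemma mem_formDeg_iff {k : ℕ} {ω : Form n K} :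
    ω ∈ formDeg n K k ↔ ω ∈ formsOfDegree (MvPolynomial (Fin n) K) (k : ℤ) :=
  forall_congr' fun _ => by rw [Ne, Ne, Nat.cast_inj]

lemma mem_formDeg_sub_one {k : ℕ} {ω : Form n K}
    (hω : ω ∈ formsOfDegree (MvPolynomial (Fin n) K) (k - 1 : ℤ)) : ω ∈ formDeg n K (k - 1) :=
  fun s hs => hω s (by omega)

lemma mem_relSub_iff {P : MvPolynomial (Fin n) K} {ω : Form n K} :
    ω ∈ relSub P ↔ ∃ ξ ζ, ω = wedge1 (grad P) ξ + P • ζ := by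
  rw [relSub, sup_comm, Submodule.mem_sup]
  constructor
  · rintro ⟨_, ⟨ξ, rfl⟩, _, ⟨ζ, rfl⟩, rfl⟩
    exact ⟨ξ, ζ, rfl⟩
  · rintro ⟨ξ, ζ, rfl⟩
    exact ⟨_, ⟨ξ, rfl⟩, _, ⟨ζ, rfl⟩, rfl⟩

/-- In degree `0` the truncated subtraction in `relB` makes it contain exact forms `dη`, but these
have no component of degree `0`. -/
lemma mem_relSub_of_mem_relB_zero {P : MvPolynomial (Fin n) K} {ω : Form n K}
    (hω : ω ∈ formDeg n K 0) (hB : ω ∈ relB P 0) : ω ∈ relSub P := by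
  obtain ⟨_, ⟨η, -, rfl⟩, ρ, hρ, rfl⟩ := Submodule.mem_sup.mp hB
  obtain ⟨ξ, ζ, rfl⟩ := mem_relSub_iff.mp hρ
  refine mem_relSub_iff.mpr ⟨0, Pi.single ∅ (ζ ∅), ?_⟩
  rw [map_zero, zero_add]
  funext s
  rcases eq_or_ne s ∅ with rfl | hs
  · simp [dTwist, wedge1]
  · rw [hω s (Finset.card_ne_zero.mpr (Finset.nonempty_iff_ne_empty.mpr hs))]
    simp [hs]

/-- Smoothness of the affine hypersurface `P = 0` by the Jacobian criterion: `P` and its partial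
derivatives generate the unit ideal. -/
def IsSmoothHypersurface (P : MvPolynomial (Fin n) K) : Prop :=
  Ideal.span ({P} ∪ Set.range fun i => pderiv i P) = ⊤

namespace IsSmoothHypersurface

variable {P : MvPolynomial (Fin n) K}

lemma exists_bezout (hP : IsSmoothHypersurface P) :
    ∃ a, ∃ b : Fin n → MvPolynomial (Fin n) K, a * P + ∑ i, b i * grad P i = 1 := by
  have h1 : (1 : MvPolynomial (Fin n) K) ∈ Ideal.span ({P} ∪ Set.range fun i => pderiv i P) :=
    (Ideal.eq_top_iff_one _).mp hP
  rw [Ideal.span_union] at h1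
  obtain ⟨_, hy, _, hz, hyz⟩ := Submodule.mem_sup.mp h1
  obtain ⟨a, rfl⟩ := Ideal.mem_span_singleton'.mp hy
  obtain ⟨b, rfl⟩ := Ideal.mem_span_range_iff_exists_fun.mp hz
  exact ⟨a, b, hyz⟩

lemma ne_zero [Nontrivial K] (hP : IsSmoothHypersurface P) : P ≠ 0 := by
  rintro rfl
  obtain ⟨a, b, hab⟩ := hP.exists_bezout
  simp [grad] at hab

lemma mem_relSub (hP : IsSmoothHypersurface P) {η μ : Form n K}
    (hημ : wedge1 (grad P) η = P • μ) : η ∈ relSub P := by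
  obtain ⟨a, b, hab⟩ := hP.exists_bezout
  rw [wedge1_eq_wedge] at hημ
  have hsplit := eq_wedge_add_smul_of_wedge_eq_smul hab hημ
  rw [← wedge1_eq_wedge] at hsplit
  exact mem_relSub_iff.mpr ⟨_, _, hsplit⟩

lemma exists_eq_wedge1_add_smul [IsDomain K] (hP : IsSmoothHypersurface P) {j : ℤ}
    {η μ : Form n K} (hη : η ∈ formsOfDegree _ j) (hημ : wedge1 (grad P) η = P • μ) :
    ∃ ξ ∈ formsOfDegree _ (j - 1), ∃ ζ ∈ formsOfDegree _ j,
      η = wedge1 (grad P) ξ + P • ζ := by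
  obtain ⟨a, b, hab⟩ := hP.exists_bezout
  have hsplit := eq_wedge_add_smul_of_wedge_eq_smul hab ((wedge1_eq_wedge _ _).symm.trans hημ)
  rw [← wedge1_eq_wedge] at hsplit
  have hξ := interiorProd_mem_formsOfDegree b hη
  refine ⟨_, hξ, _, fun s hs => ?_, hsplit⟩
  have hdξ : wedge1 (grad P) (interiorProd b η) s = 0 := by
    rw [wedge1_eq_wedge]
    exact wedge_mem_formsOfDegree _ hξ s (by rwa [sub_add_cancel])
  have hPζ := congrFun hsplit s
  rw [hη s hs, Pi.add_apply, hdξ, zero_add, Pi.smul_apply, smul_eq_mul] at hPζ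
  exact (mul_eq_zero.mp hPζ.symm).resolve_left hP.ne_zero

end IsSmoothHypersurface

end PolynomialForms

section LocalizedForms

lemma derivation_ext_of_isLocalization {K R S N : Type*} [CommRing K] [CommRing R] [CommRing S]
    [Algebra K S] [Algebra R S] [AddCommGroup N] [Module K N] [Module S N] (M : Submonoid R)
    [IsLocalization M S] {D₁ D₂ : Derivation K S N}
    (h : ∀ r, D₁ (algebraMap R S r) = D₂ (algebraMap R S r)) : D₁ = D₂ := by
  ext x
  obtain ⟨⟨r, s⟩, hx⟩ := IsLocalization.surj M x
  have hr := h r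
  rw [← hx, Derivation.leibniz, Derivation.leibniz, h s, add_right_inj] at hr
  exact (IsLocalization.map_units S s).smul_left_cancel.mp hr

variable {F : Type*} [Field F] {n : ℕ} {Loc : Type*} [CommRing Loc]

section InvP

variable [Algebra (MvPolynomial (Fin n) F) Loc] (P : MvPolynomial (Fin n) F)
  [IsLocalization.Away P Loc]

lemma algebraMap_mul_invP : algebraMap (MvPolynomial (Fin n) F) Loc P * invP Loc P = 1 :=
  IsLocalization.Away.mul_invSelf P

lemma isUnit_invP : IsUnit (invP Loc P) :=
  .of_mul_eq_one_right _ (algebraMap_mul_invP P)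

end InvP

variable [Algebra F Loc]

lemma dLoc_eq_exteriorDeriv (D : Fin n → Derivation F Loc Loc) :
    dLoc Loc D = exteriorDeriv fun i => (D i).toLinearMap := by
  refine LinearMap.ext fun θ => funext fun s => ?_
  simp [dLoc, exteriorDeriv_apply, wedgeSign_smul]

lemma dLoc_mem_formsOfDegree (D : Fin n → Derivation F Loc Loc) {j : ℤ}
    {θ : FormLoc (n := n) Loc} (hθ : θ ∈ formsOfDegree Loc j) :
    dLoc Loc D θ ∈ formsOfDegree Loc (j + 1) := by
  rw [dLoc_eq_exteriorDeriv]
  exact exteriorDeriv_mem_formsOfDegree _ hθ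

lemma mem_formDegLoc_iff {k : ℕ} {θ : FormLoc (n := n) Loc} :
    θ ∈ formDegLoc (F := F) Loc k ↔ θ ∈ formsOfDegree Loc (k : ℤ) :=
  forall_congr' fun _ => by rw [Ne, Ne, Nat.cast_inj]

variable [Algebra (MvPolynomial (Fin n) F) Loc]

/-- The derivations `D_i` of the localization extend the partial derivatives of polynomials. -/
def ExtendsPderiv (D : Fin n → Derivation F Loc Loc) : Prop :=
  ∀ (i : Fin n) (p : MvPolynomial (Fin n) F),
    D i (algebraMap (MvPolynomial (Fin n) F) Loc p) =
      algebraMap (MvPolynomial (Fin n) F) Loc (pderiv i p)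

lemma ExtendsPderiv.apply_invP_pow (P : MvPolynomial (Fin n) F) [IsLocalization.Away P Loc]
    {D : Fin n → Derivation F Loc Loc} (hD : ExtendsPderiv D) (i : Fin n) (m : ℕ) :
    D i (invP Loc P ^ m) =
      -(m * invP Loc P ^ (m + 1) * algebraMap (MvPolynomial (Fin n) F) Loc (grad P i)) := by
  rw [Derivation.leibniz_pow, (D i).leibniz_of_mul_eq_one
    ((mul_comm _ _).trans (algebraMap_mul_invP (Loc := Loc) P)), hD]
  rcases m with _ | m
  · simp
  · simp only [Nat.add_sub_cancel, nsmul_eq_mul, smul_eq_mul, grad]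
    ring

lemma ExtendsPderiv.dLoc_dLoc (P : MvPolynomial (Fin n) F) [IsLocalization.Away P Loc]
    {D : Fin n → Derivation F Loc Loc} (hD : ExtendsPderiv D) (θ : FormLoc (n := n) Loc) :
    dLoc Loc D (dLoc Loc D θ) = 0 := by
  have hcomm (i j : Fin n) : Commute (D i).toLinearMap (D j).toLinearMap := by
    have hbracket : ⁅D i, D j⁆ = 0 :=
      derivation_ext_of_isLocalization (Submonoid.powers P) fun p => by
        rw [Derivation.commutator_apply, hD, hD, hD, hD]
        exact sub_eq_zero.mpr (congrArg _ (LinearMap.congr_fun (commute_pderiv i j) p))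
    exact LinearMap.ext fun x => sub_eq_zero.mp (DFunLike.congr_fun hbracket x)
  rw [dLoc_eq_exteriorDeriv]
  exact LinearMap.congr_fun (exteriorDeriv_mul_self hcomm) θ

variable [IsScalarTower F (MvPolynomial (Fin n) F) Loc]

lemma polyInc_wedge1 (α : Fin n → MvPolynomial (Fin n) F) (ω : Form n F) :
    polyInc Loc (wedge1 α ω) =
      wedge (fun i => algebraMap (MvPolynomial (Fin n) F) Loc (α i)) (polyInc Loc ω) := by
  funext s
  simp [polyInc, wedge1, sgn, wedge_apply, wedgeSign_smul]

lemma ExtendsPderiv.dLoc_polyInc {D : Fin n → Derivation F Loc Loc} (hD : ExtendsPderiv D)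
    (ω : Form n F) : dLoc Loc D (polyInc Loc ω) = polyInc Loc (dRham n F ω) := by
  funext s
  simp [dLoc, polyInc, dTwist, sgn, hD _ _]

lemma ExtendsPderiv.dLoc_mem_polySub {D : Fin n → Derivation F Loc Loc} (hD : ExtendsPderiv D)
    {θ : FormLoc (n := n) Loc} (hθ : θ ∈ polySub (F := F) Loc) :
    dLoc Loc D θ ∈ polySub (F := F) Loc := by
  obtain ⟨ω, rfl⟩ := hθ
  exact ⟨_, (hD.dLoc_polyInc ω).symm⟩

variable (Loc) (P : MvPolynomial (Fin n) F) [IsLocalization.Away P Loc]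

/-- The map `η ↦ η / P ^ m` from polynomial forms to localized forms. Its range for `m = 1` consists
of the forms with at most a simple pole along `P = 0`. -/
def divPow (m : ℕ) : Form n F →ₗ[F] FormLoc (n := n) Loc :=
  invP Loc P ^ m • polyInc Loc

/-- The map `ω ↦ (dP / P) ∧ ω` from polynomial forms to localized forms; on forms of degree `k` it
is `phiDeg` up to the sign `(-1) ^ k`. -/
def dlogWedge : Form n F →ₗ[F] FormLoc (n := n) Loc :=
  divPow Loc P 1 ∘ₗ wedge1 (grad P)

variable {Loc}

lemma divPow_apply (m : ℕ) (η : Form n F) (s : Finset (Fin n)) :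
    divPow Loc P m η s = invP Loc P ^ m * algebraMap (MvPolynomial (Fin n) F) Loc (η s) := rfl

lemma divPow_zero : divPow Loc P 0 = polyInc Loc := by
  rw [divPow, pow_zero, one_smul]

lemma divPow_add_pow_smul (m l : ℕ) (η : Form n F) :
    divPow Loc P (m + l) (P ^ l • η) = divPow Loc P m η := by
  funext s
  rw [divPow_apply, divPow_apply, Pi.smul_apply, smul_eq_mul, map_mul, map_pow, pow_add, mul_assoc,
    ← mul_assoc (_ ^ l), ← mul_pow, mul_comm (invP Loc P), algebraMap_mul_invP, one_pow, one_mul]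

lemma divPow_succ_smul (m : ℕ) (η : Form n F) :
    divPow Loc P (m + 1) (P • η) = divPow Loc P m η := by
  simpa only [pow_one] using divPow_add_pow_smul P m 1 η

lemma polySub_le_range_divPow_one :
    polySub (F := F) Loc ≤ LinearMap.range (divPow Loc P 1) := by
  rintro _ ⟨ω, rfl⟩
  exact ⟨P • ω, by rw [divPow_succ_smul, divPow_zero]⟩

lemma exists_divPow_eq (θ : FormLoc (n := n) Loc) : ∃ m η, divPow Loc P m η = θ := by
  obtain ⟨⟨_, m, rfl⟩, hη⟩ :=
    IsLocalization.exist_integer_multiples_of_finite (Submonoid.powers P) θ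
  choose η hη using hη
  refine ⟨m, η, funext fun s => ?_⟩
  rw [divPow_apply, hη, Algebra.smul_def, map_pow, ← mul_assoc, ← mul_pow, mul_comm (invP Loc P),
    algebraMap_mul_invP, one_pow, one_mul]

variable {P}

lemma divPow_apply_eq_zero_iff (hP : P ≠ 0) {m : ℕ} {η : Form n F} {s : Finset (Fin n)} :
    divPow Loc P m η s = 0 ↔ η s = 0 := by
  rw [divPow_apply, ((isUnit_invP P).pow m).mul_right_eq_zero]
  exact map_eq_zero_iff _
    (IsLocalization.injective Loc (powers_le_nonZeroDivisors_of_noZeroDivisors hP))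

lemma divPow_injective (hP : P ≠ 0) (m : ℕ) : Function.Injective (divPow Loc P m) :=
  (injective_iff_map_eq_zero _).mpr fun _ hη =>
    funext fun s => (divPow_apply_eq_zero_iff hP).mp (congrFun hη s)

lemma divPow_mem_formsOfDegree_iff (hP : P ≠ 0) {m : ℕ} {η : Form n F} {j : ℤ} :
    divPow Loc P m η ∈ formsOfDegree Loc j ↔ η ∈ formsOfDegree _ j :=
  forall₂_congr fun _ _ => divPow_apply_eq_zero_iff hP

variable {D : Fin n → Derivation F Loc Loc}

lemma ExtendsPderiv.dLoc_divPow (hD : ExtendsPderiv D) (m : ℕ) (η : Form n F) :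
    dLoc Loc D (divPow Loc P m η) =
      divPow Loc P m (dRham n F η) - (m : F) • divPow Loc P (m + 1) (wedge1 (grad P) η) := by
  have hwedge : wedge (fun i => D i (invP Loc P ^ m)) (polyInc Loc η) =
      -((m : F) • divPow Loc P (m + 1) (wedge1 (grad P) η)) := by
    funext s
    simp only [divPow, LinearMap.smul_apply, polyInc_wedge1, wedge_apply, hD.apply_invP_pow P,
      Pi.neg_apply, Pi.smul_apply, Finset.smul_sum, ← Finset.sum_neg_distrib]
    refine Finset.sum_congr rfl fun i _ => ?_
    simp only [wedgeSign_smul, smul_eq_mul, Nat.cast_smul_eq_nsmul, nsmul_eq_mul]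
    ring
  have hleibniz := exteriorDeriv_smul D (invP Loc P ^ m) (polyInc Loc η)
  rw [← dLoc_eq_exteriorDeriv, hwedge, hD.dLoc_polyInc] at hleibniz
  rw [sub_eq_neg_add]
  exact hleibniz

lemma dlogWedge_apply (ω : Form n F) :
    dlogWedge Loc P ω = divPow Loc P 1 (wedge1 (grad P) ω) := rfl

lemma phiDeg_eq_smul_dlogWedge (k : ℕ) (ω : Form n F) :
    phiDeg Loc P k ω = (-1 : F) ^ k • dlogWedge Loc P ω := by
  funext s
  rw [phiDeg, Pi.smul_apply, dlogWedge_apply, divPow_apply, pow_one]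

lemma ExtendsPderiv.dLoc_dlogWedge (hD : ExtendsPderiv D) (ω : Form n F) :
    dLoc Loc D (dlogWedge Loc P ω) = -dlogWedge Loc P (dRham n F ω) := by
  rw [dlogWedge_apply, dlogWedge_apply, hD.dLoc_divPow, wedge1_wedge1, map_zero, smul_zero,
    sub_zero, dRham_wedge1_grad, map_neg]

lemma ExtendsPderiv.dLoc_phiDeg (hD : ExtendsPderiv D) (k : ℕ) (ω : Form n F) :
    dLoc Loc D (phiDeg Loc P k ω) = phiDeg Loc P (k + 1) (dRham n F ω) := by
  rw [phiDeg_eq_smul_dlogWedge, phiDeg_eq_smul_dlogWedge, map_smul, hD.dLoc_dlogWedge, pow_succ,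
    mul_neg_one, smul_neg, neg_smul]

lemma dlogWedge_mem_formDegLoc {k : ℕ} {ω : Form n F} (hω : ω ∈ formDeg n F k) :
    dlogWedge Loc P ω ∈ formDegLoc (F := F) Loc (k + 1) := by
  rw [mem_formDegLoc_iff, Nat.cast_succ, dlogWedge_apply, wedge1_eq_wedge]
  refine fun s hs => ?_
  rw [divPow_apply, wedge_mem_formsOfDegree _ (mem_formDeg_iff.mp hω) s hs, map_zero, mul_zero]

lemma dlogWedge_mem_polySub {ω : Form n F} (hω : ω ∈ relSub P) :
    dlogWedge Loc P ω ∈ polySub (F := F) Loc := by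
  obtain ⟨ξ, ζ, rfl⟩ := mem_relSub_iff.mp hω
  refine ⟨wedge1 (grad P) ζ, ?_⟩
  rw [dlogWedge_apply, map_add, wedge1_wedge1, zero_add, wedge1_smul, divPow_succ_smul, divPow_zero]

lemma IsSmoothHypersurface.mem_relSub_of_dlogWedge_mem_polySub (hP : IsSmoothHypersurface P)
    {ω : Form n F} (hω : dlogWedge Loc P ω ∈ polySub (F := F) Loc) : ω ∈ relSub P := by
  obtain ⟨μ, hμ⟩ := hω
  rw [← divPow_zero P, ← divPow_succ_smul, dlogWedge_apply] at hμ
  exact hP.mem_relSub (divPow_injective hP.ne_zero _ hμ.symm)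

section PoleReduction

variable [CharZero F]

lemma ExtendsPderiv.exists_wedge1_grad_eq_smul (hD : ExtendsPderiv D) (hP : P ≠ 0) {m : ℕ}
    {η : Form n F}
    (hη : dLoc Loc D (divPow Loc P (m + 1) η) ∈ LinearMap.range (divPow Loc P 1)) :
    ∃ μ, wedge1 (grad P) η = P • μ := by
  obtain ⟨ν, hν⟩ := hη
  have hm : ((m + 1 : ℕ) : F) ≠ 0 := Nat.cast_ne_zero.mpr m.succ_ne_zero
  have hclear : P ^ (m + 1) • ν =
      P • dRham n F η - ((m + 1 : ℕ) : F) • wedge1 (grad P) η := by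
    refine divPow_injective (Loc := Loc) hP (1 + (m + 1)) ?_
    rw [divPow_add_pow_smul, hν, hD.dLoc_divPow, map_sub, add_comm 1, divPow_succ_smul,
      map_smul]
  refine ⟨((m + 1 : ℕ) : F)⁻¹ • (dRham n F η - P ^ m • ν), ?_⟩
  rw [smul_comm P, smul_sub P, smul_smul P, ← pow_succ', hclear, sub_sub_cancel,
    inv_smul_smul₀ hm]

/-- `η / P ^ (m + 1)` is lowered to a pole of order `m` modulo exact forms since
`d (ξ / P ^ m) = dξ / P ^ m - m dP ∧ ξ / P ^ (m + 1)`. -/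
lemma ExtendsPderiv.divPow_succ_wedge1_add_smul (hD : ExtendsPderiv D) {m : ℕ} (hm : m ≠ 0)
    (ξ ζ : Form n F) :
    divPow Loc P (m + 1) (wedge1 (grad P) ξ + P • ζ) =
      divPow Loc P m (ζ + (m : F)⁻¹ • dRham n F ξ) -
        dLoc Loc D ((m : F)⁻¹ • divPow Loc P m ξ) := by
  rw [map_smul, hD.dLoc_divPow, smul_sub, inv_smul_smul₀ (Nat.cast_ne_zero.mpr hm), map_add,
    map_add, divPow_succ_smul, map_smul]
  abel

lemma ExtendsPderiv.exists_divPow_sub_dLoc_mem (hD : ExtendsPderiv D)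
    (hP : IsSmoothHypersurface P) {j : ℤ} (m : ℕ) {η : Form n F} (hη : η ∈ formsOfDegree _ j)
    (hdη : dLoc Loc D (divPow Loc P (m + 1) η) ∈ LinearMap.range (divPow Loc P 1)) :
    ∃ β ∈ formsOfDegree Loc (j - 1),
      divPow Loc P (m + 1) η - dLoc Loc D β ∈ LinearMap.range (divPow Loc P 1) := by
  induction m generalizing η with
  | zero => exact ⟨0, zero_mem _, η, by simp⟩
  | succ m ih =>
    obtain ⟨μ, hμ⟩ := hD.exists_wedge1_grad_eq_smul hP.ne_zero hdη
    obtain ⟨ξ, hξ, ζ, hζ, rfl⟩ := hP.exists_eq_wedge1_add_smul hη hμ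
    rw [hD.divPow_succ_wedge1_add_smul m.succ_ne_zero] at hdη ⊢
    rw [map_sub, hD.dLoc_dLoc P, sub_zero] at hdη
    have hdξ : dRham n F ξ ∈ formsOfDegree _ j := by
      rw [dRham_eq_exteriorDeriv]
      exact sub_add_cancel j 1 ▸ exteriorDeriv_mem_formsOfDegree _ hξ
    obtain ⟨β, hβ, hrange⟩ := ih (add_mem hζ (smul_mem_formsOfDegree _ hdξ)) hdη
    refine ⟨β - ((m + 1 : ℕ) : F)⁻¹ • divPow Loc P (m + 1) ξ, sub_mem hβ
      (smul_mem_formsOfDegree _ ((divPow_mem_formsOfDegree_iff hP.ne_zero).mpr hξ)), ?_⟩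
    rwa [map_sub, sub_sub_sub_cancel_right]

lemma ExtendsPderiv.exists_sub_dLoc_sub_dlogWedge_mem_polySub (hD : ExtendsPderiv D)
    (hP : IsSmoothHypersurface P) {j : ℤ} {θ : FormLoc (n := n) Loc} (hθ : θ ∈ formsOfDegree Loc j)
    (hdθ : dLoc Loc D θ ∈ LinearMap.range (divPow Loc P 1)) :
    ∃ β ∈ formsOfDegree Loc (j - 1), ∃ ξ ∈ formsOfDegree _ (j - 1),
      θ - dLoc Loc D β - dlogWedge Loc P ξ ∈ polySub (F := F) Loc := by
  obtain ⟨m, η, rfl⟩ := exists_divPow_eq P θ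
  rw [← divPow_succ_smul] at hθ hdθ ⊢
  obtain ⟨β, hβ, ν, hν⟩ := hD.exists_divPow_sub_dLoc_mem hP m
    ((divPow_mem_formsOfDegree_iff hP.ne_zero).mp hθ) hdθ
  have hν_deg : ν ∈ formsOfDegree _ j := by
    rw [← divPow_mem_formsOfDegree_iff (Loc := Loc) hP.ne_zero, hν]
    exact sub_mem hθ (sub_add_cancel j 1 ▸ dLoc_mem_formsOfDegree D hβ)
  obtain ⟨μ, hμ⟩ : ∃ μ, wedge1 (grad P) ν = P • μ := by
    refine hD.exists_wedge1_grad_eq_smul hP.ne_zero (m := 0) ?_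
    rwa [zero_add, hν, map_sub, hD.dLoc_dLoc P, sub_zero]
  obtain ⟨ξ, hξ, ζ, -, rfl⟩ := hP.exists_eq_wedge1_add_smul hν_deg hμ
  refine ⟨β, hβ, ξ, hξ, ζ, ?_⟩
  rw [← hν, map_add, dlogWedge_apply, add_sub_cancel_left, divPow_succ_smul, divPow_zero]

end PoleReduction

section Cohomology

lemma ExtendsPderiv.dLoc_add_dlogWedge_dRham_mem_polySub (hD : ExtendsPderiv D)
    {θ β : FormLoc (n := n) Loc} {ξ : Form n F}
    (h : θ - dLoc Loc D β - dlogWedge Loc P ξ ∈ polySub (F := F) Loc) :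
    dLoc Loc D θ + dlogWedge Loc P (dRham n F ξ) ∈ polySub (F := F) Loc := by
  have hd := hD.dLoc_mem_polySub h
  rwa [map_sub, map_sub, hD.dLoc_dLoc P, hD.dLoc_dlogWedge, sub_zero, sub_neg_eq_add] at hd

lemma ExtendsPderiv.dlogWedge_mem_locZ (hD : ExtendsPderiv D) {k : ℕ} {ω : Form n F}
    (hω : ω ∈ relZ P k) : dlogWedge Loc P ω ∈ locZ Loc D (k + 1) := by
  refine ⟨dlogWedge_mem_formDegLoc hω.1, ?_⟩
  rw [SetLike.mem_coe, Submodule.mem_comap, hD.dLoc_dlogWedge]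
  exact neg_mem (dlogWedge_mem_polySub hω.2)

lemma ExtendsPderiv.dlogWedge_mem_locB (hD : ExtendsPderiv D) {k : ℕ} {ω : Form n F}
    (hω : ω ∈ formDeg n F k) (hB : ω ∈ relB P k) : dlogWedge Loc P ω ∈ locB Loc D (k + 1) := by
  rcases k with _ | k
  · exact Submodule.mem_sup_right (dlogWedge_mem_polySub (mem_relSub_of_mem_relB_zero hω hB))
  · obtain ⟨_, ⟨η, hη, rfl⟩, ρ, hρ, rfl⟩ := Submodule.mem_sup.mp hB
    rw [map_add, ← neg_neg (dlogWedge Loc P (dRham n F η)), ← hD.dLoc_dlogWedge, ← map_neg]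
    exact Submodule.add_mem_sup
      (Submodule.mem_map_of_mem (neg_mem (dlogWedge_mem_formDegLoc hη))) (dlogWedge_mem_polySub hρ)

/-- The map `H^k(Ω/(P,dP)) → H^{k+1}(Ω[P⁻¹]/Ω)` induced by `ω ↦ ω ∧ dP / P`. The
sign is that of `ω ∧ dP = (-1) ^ k dP ∧ ω`. -/
def cohomologyMap (hD : ExtendsPderiv D) (P : MvPolynomial (Fin n) F) [IsLocalization.Away P Loc]
    (k : ℕ) : relH P k →ₗ[F] locH Loc D (k + 1) :=
  Submodule.mapQ _ _
    (((-1 : F) ^ k • dlogWedge Loc P).restrict fun _ hω =>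
      Submodule.smul_mem _ _ (hD.dlogWedge_mem_locZ hω))
    fun ω hω => Submodule.smul_mem _ _ (hD.dlogWedge_mem_locB ω.2.1 hω)

lemma cohomologyMap_mk (hD : ExtendsPderiv D) {k : ℕ} (ω : relZ P k) (θ : locZ Loc D (k + 1))
    (hθ : (θ : FormLoc (n := n) Loc) = phiDeg Loc P k ω) :
    cohomologyMap hD P k (Submodule.Quotient.mk ω) = Submodule.Quotient.mk θ := by
  rw [phiDeg_eq_smul_dlogWedge] at hθ
  exact congrArg Submodule.Quotient.mk (Subtype.ext hθ.symm)

variable [CharZero F]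

lemma ExtendsPderiv.mem_relB_of_dlogWedge_mem_locB (hD : ExtendsPderiv D)
    (hP : IsSmoothHypersurface P) {k : ℕ} {ω : Form n F}
    (hω : dlogWedge Loc P ω ∈ locB Loc D (k + 1)) : ω ∈ relB P k := by
  obtain ⟨_, ⟨θ, hθ, rfl⟩, ρ, hρ, hsum⟩ := Submodule.mem_sup.mp hω
  have hdθ : dLoc Loc D θ = dlogWedge Loc P ω - ρ := eq_sub_of_add_eq hsum
  obtain ⟨β, -, ξ, hξ, hpoly⟩ := hD.exists_sub_dLoc_sub_dlogWedge_mem_polySub hP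
    (mem_formDegLoc_iff.mp hθ)
    (hdθ ▸ sub_mem (LinearMap.mem_range_self _ _) (polySub_le_range_divPow_one P hρ))
  have hclosed := add_mem (hD.dLoc_add_dlogWedge_dRham_mem_polySub hpoly) hρ
  rw [hdθ, sub_add_eq_add_sub, sub_add_cancel, ← map_add] at hclosed
  rw [← neg_add_cancel_left (dRham n F ξ) ω, add_comm _ ω, ← map_neg]
  exact Submodule.add_mem_sup
    (Submodule.mem_map_of_mem (neg_mem (mem_formDeg_sub_one hξ)))
    (hP.mem_relSub_of_dlogWedge_mem_polySub hclosed)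

lemma ExtendsPderiv.exists_sub_dlogWedge_mem_locB (hD : ExtendsPderiv D)
    (hP : IsSmoothHypersurface P) {k : ℕ} {θ : FormLoc (n := n) Loc}
    (hθ : θ ∈ locZ Loc D (k + 1)) : ∃ ξ ∈ relZ P k, θ - dlogWedge Loc P ξ ∈ locB Loc D (k + 1) := by
  obtain ⟨hdeg, hdθ⟩ := hθ
  obtain ⟨β, hβ, ξ, hξ, hpoly⟩ := hD.exists_sub_dLoc_sub_dlogWedge_mem_polySub hP
    (mem_formDegLoc_iff.mp hdeg) (polySub_le_range_divPow_one P hdθ)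
  rw [Nat.cast_succ, add_sub_cancel_right] at hβ hξ
  refine ⟨ξ, ⟨mem_formDeg_iff.mpr hξ, hP.mem_relSub_of_dlogWedge_mem_polySub (Loc := Loc) ?_⟩, ?_⟩
  · rw [← add_sub_cancel_left (dLoc Loc D θ) (dlogWedge Loc P _)]
    exact sub_mem (hD.dLoc_add_dlogWedge_dRham_mem_polySub hpoly) hdθ
  · rw [← add_sub_cancel (dLoc Loc D β) (θ - _), sub_right_comm]
    exact Submodule.add_mem_sup (Submodule.mem_map_of_mem (mem_formDegLoc_iff.mpr hβ)) hpoly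

lemma cohomologyMap_bijective (hD : ExtendsPderiv D) (hP : IsSmoothHypersurface P) (k : ℕ) :
    Function.Bijective (cohomologyMap hD P k) := by
  have hsign : (-1 : F) ^ k ≠ 0 := pow_ne_zero k (neg_ne_zero.mpr one_ne_zero)
  constructor
  · rw [injective_iff_map_eq_zero]
    intro x hx
    obtain ⟨ω, rfl⟩ := Submodule.Quotient.mk_surjective _ x
    have hB : (-1 : F) ^ k • dlogWedge Loc P ω ∈ locB Loc D (k + 1) :=
      (Submodule.Quotient.mk_eq_zero (Submodule.comap (locZ Loc D (k + 1)).subtype _)).mp hx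
    exact (Submodule.Quotient.mk_eq_zero _).mpr
      (hD.mem_relB_of_dlogWedge_mem_locB hP ((Submodule.smul_mem_iff _ hsign).mp hB))
  · intro y
    obtain ⟨θ, rfl⟩ := Submodule.Quotient.mk_surjective _ y
    obtain ⟨ξ, hξ, hB⟩ := hD.exists_sub_dlogWedge_mem_locB hP θ.2
    refine ⟨Submodule.Quotient.mk (((-1 : F) ^ k)⁻¹ • ⟨ξ, hξ⟩), ?_⟩
    refine ((Submodule.Quotient.eq _).mpr ?_).symm
    change (θ : FormLoc (n := n) Loc) -
      (-1 : F) ^ k • dlogWedge Loc P (((-1 : F) ^ k)⁻¹ • ξ) ∈ locB Loc D (k + 1)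
    rwa [map_smul, smul_inv_smul₀ hsign]

end Cohomology

end LocalizedForms

/-- Let `F` be a field of characteristic zero and
`P ∈ F[x_1,…,x_n]` with the hypersurface `P = 0` smooth.  The degree-raising
map `Ω/(P,dP) → Ω[P⁻¹]/Ω`, `ω ↦ ω̃∧dP/P`, is a well-defined chain map and
induces an isomorphism `H^k(Ω/(P,dP)) ≅ H^{k+1}(Ω[P⁻¹]/Ω)` for every `k`. -/
theorem hypersurface_cohomology_via_localization {F : Type*} [Field F]
    [CharZero F] {n : ℕ} (hn : 0 < n) (P : MvPolynomial (Fin n) F)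
    (hsmooth :
      Ideal.span ({P} ∪ Set.range fun i => pderiv i P) =
        (⊤ : Ideal (MvPolynomial (Fin n) F)))
    (Loc : Type*) [CommRing Loc] [Algebra (MvPolynomial (Fin n) F) Loc]
    [Algebra F Loc] [IsScalarTower F (MvPolynomial (Fin n) F) Loc]
    [IsLocalization.Away P Loc]
    (D : Fin n → Derivation F Loc Loc)
    (hD : ∀ (i : Fin n) (p : MvPolynomial (Fin n) F),
      D i (algebraMap (MvPolynomial (Fin n) F) Loc p) =
        algebraMap (MvPolynomial (Fin n) F) Loc (pderiv i p)) :
    (∀ k : ℕ, ∀ ω ∈ relSub P ⊓ formDeg n F k,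
      phiDeg Loc P k ω ∈ polySub (F := F) Loc) ∧
    (∀ k : ℕ, ∀ ω ∈ formDeg n F k,
      (fun s => dLoc Loc D (phiDeg Loc P k ω) s -
        phiDeg Loc P (k + 1) (dRham n F ω) s) ∈ polySub (F := F) Loc) ∧
    (∃ e : ∀ k : ℕ, (relH P k) ≃ₗ[F] locH Loc D (k + 1),
      ∀ (k : ℕ) (ω : relZ P k) (θ : locZ Loc D (k + 1)),
        (θ : FormLoc (n := n) Loc) = phiDeg Loc P k (ω : Form n F) →
          e k (Submodule.Quotient.mk ω) = Submodule.Quotient.mk θ) := by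
  refine ⟨fun k ω hω => ?_, fun k ω _ => ?_, fun k => .ofBijective (cohomologyMap hD P k)
    (cohomologyMap_bijective hD hsmooth k), fun k => cohomologyMap_mk hD⟩
  · rw [phiDeg_eq_smul_dlogWedge]
    exact Submodule.smul_mem _ _ (dlogWedge_mem_polySub hω.1)
  · rw [ExtendsPderiv.dLoc_phiDeg hD]
    simp only [sub_self]
    exact zero_mem _

end
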